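/- arXiv:2408.15094 — 2 statements merged into one kernel-verified Lean document; each statement's English description precedes it below -/
import Mathlib

section
/- Let q, q¹, …, qᵐ be probability measures on a measurable space X and b ∈ ℝᵐ, and assume the Slater condition: there exist a probability measure p̂ and ζ > 0 with KL(qⁱ‖p̂) ≤ bᵢ − ζ for all i. Let λ* ∈ ℝ₊ᵐ be a maximizer of the dual function g(λ) = inf_p [KL(q‖p) + Σᵢ λᵢ (KL(qⁱ‖p) − bᵢ)]. Then the mixture q_mix^{(λ*)} = (q + Σᵢ λ*ᵢ qⁱ)/(1 + Σᵢ λ*ᵢ) is an optimal solution of the constrained problem: it is feasible, i.e., KL(qⁱ‖q_mix^{(λ*)}) ≤ bᵢ for all i, and KL(q‖q_mix^{(λ*)}) = inf{KL(q‖p) : p a probability measure with KL(qⁱ‖p) ≤ bᵢ for all i}. -/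
open MeasureTheory

/-- The Kullback–Leibler divergence `KL(μ‖ν)`, with values in `EReal`. -/
noncomputable def KL {X : Type*} [MeasurableSpace X] (μ ν : Measure X) : EReal :=
  open Classical in
  if μ ≪ ν ∧ Integrable (llr μ ν) μ then ((∫ x, llr μ ν x ∂μ : ℝ) : EReal) else ⊤

/-- The dual function `g(λ) = inf over probability measures p of
`KL(q‖p) + ∑ i, λ i * (KL(qⁱ‖p) − b i)`. -/
noncomputable def dualFn {X : Type*} [MeasurableSpace X] {m : ℕ}
    (q : Measure X) (qi : Fin m → Measure X) (b : Fin m → ℝ) (l : Fin m → ℝ) : EReal :=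
  ⨅ p : {p : Measure X // IsProbabilityMeasure p},
    KL q p.1 + ∑ i, (l i : EReal) * (KL (qi i) p.1 - (b i : EReal))

/-- The mixture distribution `q_mix^{(λ)} = (q + ∑ i, λ i • qⁱ) / (1 + ∑ i, λ i)`. -/
noncomputable def qMix {X : Type*} [MeasurableSpace X] {m : ℕ}
    (q : Measure X) (qi : Fin m → Measure X) (l : Fin m → ℝ) : Measure X :=
  (ENNReal.ofReal (1 + ∑ i, l i))⁻¹ • (q + ∑ i, ENNReal.ofReal (l i) • qi i)

open Filter InformationTheory Topology
open scoped ENNReal NNReal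

/-
The mixture `q_mix^{(λ)}` minimizes the Lagrangian `L(λ, ·)`: by the compensation identity,
replacing it with `p` raises the weighted sum of divergences by `(1 + ∑ᵢ λᵢ) KL(q_mix^{(λ)}‖p)`.
Therefore `KL(qⁱ‖q_mix^{(λ)}) - bᵢ` are the components of a supergradient of the dual function at
`λ`, provided that they are finite, which is automatic only where `λᵢ > 0`. For this reason the
optimality of `λ*` is exploited at nearby points and not at `λ*` itself. At `λ* + t eᵢ` it gives
the `i`-th constraint, which survives `t → 0⁺` because the divergence is lower semicontinuous
along these mixtures. At `c λ*` it gives `∑ᵢ λ*ᵢ (KL(qⁱ‖·) - bᵢ) ≥ 0`, which survives `c → 1⁻`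
because `c q_mix^{(λ*)} ≤ q_mix^{(c λ*)}` bounds the divergences at `c λ*` by those at `λ*` plus
`-log c`. Optimality follows by weak duality.
-/

section KullbackLeibler

variable {X : Type*} [MeasurableSpace X] {μ ν ρ : Measure X}

lemma toReal_rnDeriv_pos [SigmaFinite μ] [SigmaFinite ν] (hμν : μ ≪ ν) :
    ∀ᵐ x ∂μ, 0 < (μ.rnDeriv ν x).toReal := by
  filter_upwards [Measure.rnDeriv_pos hμν, hμν.ae_le (Measure.rnDeriv_lt_top μ ν)]
    with x hpos hlt using ENNReal.toReal_pos hpos.ne' hlt.ne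

lemma llr_add_llr [SigmaFinite μ] [SigmaFinite ν] [SigmaFinite ρ] (hμν : μ ≪ ν) (hνρ : ν ≪ ρ) :
    llr μ ν + llr ν ρ =ᵐ[μ] llr μ ρ := by
  have hμρ := hμν.trans hνρ
  filter_upwards [hμρ.ae_le (Measure.rnDeriv_mul_rnDeriv (κ := ρ) hμν),
    toReal_rnDeriv_pos hμν, hμν.ae_le (toReal_rnDeriv_pos hνρ)]
    with x hchain hμν_pos hνρ_pos
  simp only [Pi.add_apply, llr_def, ← hchain, Pi.mul_apply, ENNReal.toReal_mul,
    Real.log_mul hμν_pos.ne' hνρ_pos.ne']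

lemma llr_le_neg_log_of_smul_le [IsFiniteMeasure μ] [SigmaFinite ν] {c : ℝ} (hc : 0 < c)
    (hle : ENNReal.ofReal c • μ ≤ ν) : llr μ ν ≤ᵐ[μ] fun _ ↦ -Real.log c := by
  have hc' : ENNReal.ofReal c ≠ 0 := by simpa using hc
  have hμν : μ ≪ ν := (Measure.absolutelyContinuous_smul hc').trans hle.absolutelyContinuous
  filter_upwards [hμν.ae_le (Measure.rnDeriv_le_one_of_le hle),
    hμν.ae_le (Measure.rnDeriv_smul_left_of_ne_top μ ν (ENNReal.ofReal_ne_top (r := c))),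
    toReal_rnDeriv_pos hμν] with x hle_one hsmul hpos
  have hmul : c * (μ.rnDeriv ν x).toReal ≤ 1 := by
    rw [hsmul] at hle_one
    simpa [hc.le] using ENNReal.toReal_mono ENNReal.one_ne_top hle_one
  have hlog := Real.log_nonpos (by positivity) hmul
  rw [Real.log_mul hc.ne' hpos.ne'] at hlog
  rw [llr_def]
  linarith

/- The negative part of `llr μ ν` is always integrable because `-log t ≥ 1 - t`, so only an
upper bound is needed. -/
lemma integrable_llr_of_le [IsFiniteMeasure μ] [IsFiniteMeasure ν] (hμν : μ ≪ ν) {f : X → ℝ}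
    (hf : Integrable f μ) (hle : llr μ ν ≤ᵐ[μ] f) : Integrable (llr μ ν) μ := by
  have hlower : (fun x ↦ 1 - (ν.rnDeriv μ x).toReal) ≤ᵐ[μ] llr μ ν := by
    filter_upwards [exp_neg_llr hμν] with x hx
    rw [← hx]
    linarith [Real.add_one_le_exp (-llr μ ν x)]
  exact integrable_of_le_of_le (measurable_llr μ ν).aestronglyMeasurable hlower hle
    ((integrable_const 1).sub Measure.integrable_toReal_rnDeriv) hf

lemma klDiv_eq_ofReal_integral_llr [IsProbabilityMeasure μ] [IsProbabilityMeasure ν]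
    (hμν : μ ≪ ν) (hint : Integrable (llr μ ν) μ) :
    klDiv μ ν = ENNReal.ofReal (∫ x, llr μ ν x ∂μ) := by
  simp [klDiv_of_ac_of_integrable hμν hint]

lemma klDiv_le_add_of_smul_le [IsProbabilityMeasure μ] [IsProbabilityMeasure ν]
    [IsProbabilityMeasure ρ] {c : ℝ} (hc : 0 < c) (hle : ENNReal.ofReal c • ν ≤ ρ) :
    klDiv μ ρ ≤ klDiv μ ν + ENNReal.ofReal (-Real.log c) := by
  rcases eq_or_ne (klDiv μ ν) ∞ with htop | hfin
  · simp [htop]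
  obtain ⟨hμν, hint⟩ := klDiv_ne_top_iff.1 hfin
  have hνρ : ν ≪ ρ :=
    (Measure.absolutelyContinuous_smul (by simpa using hc)).trans hle.absolutelyContinuous
  have hllr : llr μ ρ ≤ᵐ[μ] fun x ↦ llr μ ν x + -Real.log c := by
    filter_upwards [llr_add_llr hμν hνρ, hμν.ae_le (llr_le_neg_log_of_smul_le hc hle)]
      with x hadd hbound
    rw [← hadd]
    exact add_le_add_right hbound _
  have hint_bound : Integrable (fun x ↦ llr μ ν x + -Real.log c) μ :=
    hint.add (integrable_const _)
  have hint' := integrable_llr_of_le (hμν.trans hνρ) hint_bound hllr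
  calc klDiv μ ρ = ENNReal.ofReal (∫ x, llr μ ρ x ∂μ) :=
        klDiv_eq_ofReal_integral_llr (hμν.trans hνρ) hint'
    _ ≤ ENNReal.ofReal (∫ x, llr μ ν x ∂μ + -Real.log c) := by
        refine ENNReal.ofReal_le_ofReal ((integral_mono_ae hint' hint_bound hllr).trans_eq ?_)
        rw [integral_add hint (integrable_const _), integral_const, probReal_univ, one_smul]
    _ ≤ klDiv μ ν + ENNReal.ofReal (-Real.log c) := by
        rw [klDiv_eq_ofReal_integral_llr hμν hint]
        exact ENNReal.ofReal_add_le

lemma klDiv_ne_top_of_smul_le [IsProbabilityMeasure μ] [IsProbabilityMeasure ν] {c : ℝ}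
    (hc : 0 < c) (hle : ENNReal.ofReal c • μ ≤ ν) : klDiv μ ν ≠ ∞ :=
  ne_top_of_le_ne_top (by simp) (klDiv_le_add_of_smul_le hc hle)

/-- The generator `t ↦ t - 1 - log t` of the Kullback–Leibler divergence as an `f`-divergence in
its second argument. The subtraction takes place in `EReal`, so that the value at `t = 0` is `∞`
and not the junk value coming from `Real.log 0`. -/
noncomputable def reverseKLFun (t : ℝ≥0∞) : ℝ≥0∞ :=
  ((t : EReal) - 1 - ENNReal.log t).toENNReal

@[simp] lemma reverseKLFun_zero : reverseKLFun 0 = ∞ := by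
  rw [reverseKLFun, ENNReal.log_zero, EReal.coe_ennreal_zero]
  rfl

lemma measurable_reverseKLFun : Measurable reverseKLFun :=
  ((measurable_coe_ennreal_ereal.sub measurable_const).sub ENNReal.measurable_log).ereal_toENNReal

lemma continuousAt_reverseKLFun {t : ℝ≥0∞} (ht : t ≠ ∞) : ContinuousAt reverseKLFun t := by
  have hcoe : ContinuousAt (fun s : ℝ≥0∞ ↦ (s : EReal) - 1) t :=
    (EReal.continuousAt_add (by simp [← EReal.coe_one]) (by simp)).comp
      (continuous_coe_ennreal_ereal.continuousAt.prodMk continuousAt_const)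
  have hneglog : ContinuousAt (fun s ↦ -ENNReal.log s) t :=
    (continuous_neg.comp ENNReal.continuous_log).continuousAt
  have hne_top : (t : EReal) - 1 ≠ ⊤ := by
    lift t to ℝ≥0 using ht
    exact EReal.coe_ne_top ((t : ℝ) - 1)
  have hne_bot : (t : EReal) - 1 ≠ ⊥ := by
    lift t to ℝ≥0 using ht
    exact EReal.coe_ne_bot ((t : ℝ) - 1)
  exact EReal.continuous_toENNReal.continuousAt.comp
    ((EReal.continuousAt_add (.inl hne_top) (.inl hne_bot)).comp (hcoe.prodMk hneglog))

lemma reverseKLFun_eq_ofReal {t : ℝ≥0∞} (ht0 : t ≠ 0) (ht : t ≠ ∞) :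
    reverseKLFun t = ENNReal.ofReal (t.toReal - 1 - Real.log t.toReal) := by
  rw [reverseKLFun, ENNReal.log_pos_real ht0 ht]
  lift t to ℝ≥0 using ht
  exact EReal.real_coe_toENNReal ((t : ℝ) - 1 - Real.log t)

lemma mul_klFun_inv {t : ℝ≥0∞} (ht0 : t ≠ 0) (ht : t ≠ ∞) :
    t * ENNReal.ofReal (klFun t⁻¹.toReal) = reverseKLFun t := by
  have hpos := ENNReal.toReal_pos ht0 ht
  rw [reverseKLFun_eq_ofReal ht0 ht]
  nth_rw 1 [← ENNReal.ofReal_toReal ht]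
  rw [← ENNReal.ofReal_mul hpos.le, klFun_apply, ENNReal.toReal_inv, Real.log_inv]
  congr 1
  field_simp
  ring

lemma klDiv_eq_lintegral_reverseKLFun_add_singularPart [IsFiniteMeasure μ] [IsFiniteMeasure ν] :
    klDiv μ ν = ∫⁻ x, reverseKLFun (ν.rnDeriv μ x) ∂μ + ν.singularPart μ Set.univ := by
  by_cases hμν : μ ≪ ν
  · have hinv : ∀ᵐ x ∂μ, ν.rnDeriv μ x * ENNReal.ofReal (klFun (μ.rnDeriv ν x).toReal)
        = reverseKLFun (ν.rnDeriv μ x) := by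
      filter_upwards [Measure.inv_rnDeriv hμν, hμν.ae_le (Measure.rnDeriv_lt_top μ ν),
        Measure.rnDeriv_lt_top ν μ] with x hinv hlt hlt'
      rw [Pi.inv_apply] at hinv
      rw [← mul_klFun_inv (by simpa [← hinv] using hlt.ne) hlt'.ne, ← hinv, inv_inv]
    have hsing : ∀ᵐ x ∂(ν.singularPart μ), ENNReal.ofReal (klFun (μ.rnDeriv ν x).toReal) = 1 := by
      filter_upwards [Measure.rnDeriv_eq_zero_of_mutuallySingular
        (Measure.mutuallySingular_singularPart ν μ).symm
        (Measure.absolutelyContinuous_of_le (Measure.singularPart_le ν μ))] with x hx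
      simp [hx, klFun_zero]
    calc klDiv μ ν = ∫⁻ x, ENNReal.ofReal (klFun (μ.rnDeriv ν x).toReal)
            ∂(μ.withDensity (ν.rnDeriv μ) + ν.singularPart μ) := by
          rw [Measure.rnDeriv_add_singularPart, klDiv_eq_lintegral_klFun_of_ac hμν]
      _ = _ := by
          rw [lintegral_add_measure, lintegral_withDensity_eq_lintegral_mul _
            (Measure.measurable_rnDeriv ν μ) (by fun_prop), lintegral_congr_ae hsing,
            lintegral_one]
          exact congrArg (· + _) (lintegral_congr_ae hinv)
  · have hzero : ¬ ∀ᵐ x ∂μ, ν.rnDeriv μ x ≠ 0 := fun hne ↦ hμν <|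
      (withDensity_absolutelyContinuous' (Measure.measurable_rnDeriv ν μ).aemeasurable hne).trans
        (Measure.absolutelyContinuous_of_le (Measure.withDensity_rnDeriv_le ν μ))
    have htop : ∫⁻ x, reverseKLFun (ν.rnDeriv μ x) ∂μ = ∞ := by
      by_contra hne
      refine hzero ?_
      filter_upwards [ae_lt_top (measurable_reverseKLFun.comp (Measure.measurable_rnDeriv ν μ)) hne]
        with x hx h0
      simp [h0] at hx
    simp [klDiv_of_not_ac hμν, htop]

lemma klDiv_smul_add_smul_self [IsProbabilityMeasure μ] [IsFiniteMeasure ν] (a c : ℝ≥0) :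
    klDiv μ (a • ν + c • μ) =
      ∫⁻ x, (reverseKLFun (a * ν.rnDeriv μ x + c) + a * ν.singularPart μ Set.univ) ∂μ := by
  have hderiv : ∀ᵐ x ∂μ, (a • ν + c • μ).rnDeriv μ x = a * ν.rnDeriv μ x + c := by
    filter_upwards [Measure.rnDeriv_add' (a • ν) (c • μ) μ, Measure.rnDeriv_smul_left' ν μ a,
      Measure.rnDeriv_smul_left' μ μ c, Measure.rnDeriv_self μ] with x hadd hν hμ hself
    rw [hadd, Pi.add_apply, hν, hμ, Pi.smul_apply, Pi.smul_apply, hself,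
      ENNReal.smul_def, ENNReal.smul_def, smul_eq_mul, smul_eq_mul, mul_one]
  have hsing : (a • ν + c • μ).singularPart μ = a • ν.singularPart μ := by
    simp [Measure.singularPart_add, Measure.singularPart_smul, Measure.singularPart_self]
  rw [klDiv_eq_lintegral_reverseKLFun_add_singularPart, hsing,
    lintegral_add_right _ measurable_const, lintegral_const, measure_univ (μ := μ), mul_one,
    lintegral_congr_ae (hderiv.mono fun x hx ↦ congrArg reverseKLFun hx)]
  rfl

/- Fatou's lemma for the representation of the divergence through `reverseKLFun`. -/
lemma klDiv_le_liminf_klDiv_smul_add_smul_self [IsProbabilityMeasure μ] [IsFiniteMeasure ν]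
    {ι : Type*} {L : Filter ι} [L.IsCountablyGenerated] [L.NeBot] {a c : ι → ℝ≥0}
    (ha : Tendsto a L (𝓝 1)) (hc : Tendsto c L (𝓝 0)) :
    klDiv μ ν ≤ liminf (fun i ↦ klDiv μ (a i • ν + c i • μ)) L := by
  have ha' : Tendsto (fun i ↦ (a i : ℝ≥0∞)) L (𝓝 1) := ENNReal.tendsto_coe.2 ha
  have hc' : Tendsto (fun i ↦ (c i : ℝ≥0∞)) L (𝓝 0) := ENNReal.tendsto_coe.2 hc
  have hmul {s : ℝ≥0∞} (hs : s ≠ ∞) : Tendsto (fun i ↦ a i * s) L (𝓝 s) := by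
    simpa using ENNReal.Tendsto.mul_const ha' (.inr hs)
  have hlim : ∀ᵐ x ∂μ, liminf (fun i ↦
      reverseKLFun (a i * ν.rnDeriv μ x + c i) + a i * ν.singularPart μ Set.univ) L
        = reverseKLFun (ν.rnDeriv μ x) + ν.singularPart μ Set.univ := by
    filter_upwards [Measure.rnDeriv_lt_top ν μ] with x hx
    have hderiv : Tendsto (fun i ↦ a i * ν.rnDeriv μ x + c i) L (𝓝 (ν.rnDeriv μ x)) := by
      simpa using (hmul hx.ne).add hc'
    exact (((continuousAt_reverseKLFun hx.ne).tendsto.comp hderiv).add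
      (hmul (measure_ne_top _ _))).liminf_eq
  calc klDiv μ ν = ∫⁻ x, (reverseKLFun (ν.rnDeriv μ x) + ν.singularPart μ Set.univ) ∂μ := by
        simpa using klDiv_smul_add_smul_self (μ := μ) (ν := ν) 1 0
    _ ≤ liminf (fun i ↦ klDiv μ (a i • ν + c i • μ)) L := by
        simp_rw [← lintegral_congr_ae hlim, klDiv_smul_add_smul_self]
        exact lintegral_liminf_le fun i ↦ (measurable_reverseKLFun.comp
          (((Measure.measurable_rnDeriv ν μ).const_mul _).add_const _)).add_const _

lemma integrable_llr_of_klDiv_ne_top [SigmaFinite μ] [SigmaFinite ν] [SigmaFinite ρ]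
    (hμν : klDiv μ ν ≠ ∞) (hμρ : klDiv μ ρ ≠ ∞) (hνρ : ν ≪ ρ) : Integrable (llr ν ρ) μ := by
  obtain ⟨hac, hint⟩ := klDiv_ne_top_iff.1 hμν
  refine ((klDiv_ne_top_iff.1 hμρ).2.sub hint).congr ?_
  filter_upwards [llr_add_llr hac hνρ] with x hx
  simp [← hx]

lemma toReal_klDiv_eq_add_integral_llr [IsProbabilityMeasure μ] [IsProbabilityMeasure ν]
    [IsProbabilityMeasure ρ] (hμν : klDiv μ ν ≠ ∞) (hμρ : klDiv μ ρ ≠ ∞) (hνρ : ν ≪ ρ) :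
    (klDiv μ ρ).toReal = (klDiv μ ν).toReal + ∫ x, llr ν ρ x ∂μ := by
  obtain ⟨hac, hint⟩ := klDiv_ne_top_iff.1 hμν
  rw [toReal_klDiv_of_measure_eq (hac.trans hνρ) (by simp),
    toReal_klDiv_of_measure_eq hac (by simp),
    ← integral_add hint (integrable_llr_of_klDiv_ne_top hμν hμρ hνρ)]
  exact (integral_congr_ae (llr_add_llr hac hνρ)).symm

section Mixture

variable {ι : Type*} [Fintype ι] {P : ι → Measure X} {w : ι → ℝ≥0∞}

lemma smul_le_of_eq_sum_smul (hν : ν = ∑ i, w i • P i) (i : ι) : w i • P i ≤ ν := by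
  rw [hν]
  exact Finset.single_le_sum (f := fun j ↦ w j • P j) (fun _ _ ↦ Measure.zero_le _)
    (Finset.mem_univ i)

lemma absolutelyContinuous_of_eq_sum_smul (hν : ν = ∑ i, w i • P i)
    (hP : ∀ i, w i ≠ 0 → P i ≪ ρ) : ν ≪ ρ := by
  intro s hs
  rw [hν, Measure.finsetSum_apply, Finset.sum_eq_zero]
  intro i _
  rcases eq_or_ne (w i) 0 with hi | hi
  · simp [hi]
  · simp [hP i hi hs]

variable [∀ i, IsProbabilityMeasure (P i)]

lemma weight_ne_top_of_eq_sum_smul [IsFiniteMeasure ν] (hν : ν = ∑ i, w i • P i) (i : ι) :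
    w i ≠ ∞ :=
  ne_top_of_le_ne_top (measure_ne_top ν Set.univ)
    (by simpa using smul_le_of_eq_sum_smul hν i Set.univ)

lemma klDiv_ne_top_of_eq_sum_smul [IsProbabilityMeasure ν] (hν : ν = ∑ i, w i • P i) {i : ι}
    (hi : w i ≠ 0) : klDiv (P i) ν ≠ ∞ := by
  have hw := weight_ne_top_of_eq_sum_smul hν i
  refine klDiv_ne_top_of_smul_le (ENNReal.toReal_pos hi hw) ?_
  rw [ENNReal.ofReal_toReal hw]
  exact smul_le_of_eq_sum_smul hν i

/- The compensation identity. Each `klDiv (P i) ρ - klDiv (P i) ν` is the integral of the same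
function `llr ν ρ`, and these integrals average to `klDiv ν ρ`. -/
lemma sum_mul_toReal_klDiv_eq_add_klDiv_mixture [IsProbabilityMeasure ν] [IsProbabilityMeasure ρ]
    (hν : ν = ∑ i, w i • P i) (hρ : ∀ i, w i ≠ 0 → klDiv (P i) ρ ≠ ∞) :
    ∑ i, (w i).toReal * (klDiv (P i) ρ).toReal =
      ∑ i, (w i).toReal * (klDiv (P i) ν).toReal + (klDiv ν ρ).toReal := by
  have hνρ : ν ≪ ρ :=
    absolutelyContinuous_of_eq_sum_smul hν fun i hi ↦ (klDiv_ne_top_iff.1 (hρ i hi)).1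
  have hint (i) : Integrable (llr ν ρ) (w i • P i) := by
    rcases eq_or_ne (w i) 0 with hi | hi
    · simp [hi]
    · exact (integrable_llr_of_klDiv_ne_top (klDiv_ne_top_of_eq_sum_smul hν hi) (hρ i hi)
        hνρ).smul_measure (weight_ne_top_of_eq_sum_smul hν i)
  have hmean : (klDiv ν ρ).toReal = ∑ i, (w i).toReal * ∫ x, llr ν ρ x ∂(P i) := by
    calc (klDiv ν ρ).toReal = ∫ x, llr ν ρ x ∂(∑ i, w i • P i) := by
          rw [toReal_klDiv_of_measure_eq hνρ (by simp), ← hν]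
      _ = ∑ i, (w i).toReal * ∫ x, llr ν ρ x ∂(P i) := by
          simp [integral_finsetSum_measure fun i _ ↦ hint i, integral_smul_measure]
  rw [hmean, ← Finset.sum_add_distrib]
  refine Finset.sum_congr rfl fun i _ ↦ ?_
  rcases eq_or_ne (w i) 0 with hi | hi
  · simp [hi]
  · rw [toReal_klDiv_eq_add_integral_llr (klDiv_ne_top_of_eq_sum_smul hν hi) (hρ i hi) hνρ, mul_add]

lemma sum_mul_klDiv_mixture_le [IsProbabilityMeasure ν] [IsProbabilityMeasure ρ]
    (hν : ν = ∑ i, w i • P i) :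
    ∑ i, w i * klDiv (P i) ν ≤ ∑ i, w i * klDiv (P i) ρ := by
  by_cases htop : ∑ i, w i * klDiv (P i) ρ = ∞
  · simp [htop]
  have hρ (i) (hi : w i ≠ 0) : klDiv (P i) ρ ≠ ∞ := fun h ↦
    htop (ENNReal.sum_eq_top.2 ⟨i, Finset.mem_univ i, by simp [h, hi]⟩)
  have hν_ne_top (i) : w i * klDiv (P i) ν ≠ ∞ := by
    rcases eq_or_ne (w i) 0 with hi | hi
    · simp [hi]
    · exact ENNReal.mul_ne_top (weight_ne_top_of_eq_sum_smul hν i)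
        (klDiv_ne_top_of_eq_sum_smul hν hi)
  rw [← ENNReal.toReal_le_toReal (ENNReal.sum_ne_top.2 fun i _ ↦ hν_ne_top i) htop,
    ENNReal.toReal_sum fun i _ ↦ hν_ne_top i, ENNReal.toReal_sum (ENNReal.sum_ne_top.1 htop)]
  simp_rw [ENNReal.toReal_mul]
  rw [sum_mul_toReal_klDiv_eq_add_klDiv_mixture hν hρ]
  exact le_add_of_nonneg_right ENNReal.toReal_nonneg

end Mixture

end KullbackLeibler

section WeightedMixture

variable {X : Type*} [MeasurableSpace X] {m : ℕ} {q : Measure X} {qi : Fin m → Measure X}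
  {l : Fin m → ℝ}

lemma one_add_sum_pos {ι : Type*} [Fintype ι] {l : ι → ℝ} (hl : 0 ≤ l) : 0 < 1 + ∑ i, l i :=
  add_pos_of_pos_of_nonneg one_pos (Finset.sum_nonneg fun i _ ↦ hl i)

lemma isProbabilityMeasure_qMix [IsProbabilityMeasure q] [∀ i, IsProbabilityMeasure (qi i)]
    (hl : 0 ≤ l) : IsProbabilityMeasure (qMix q qi l) := by
  constructor
  have hsum : (q + ∑ i, ENNReal.ofReal (l i) • qi i) Set.univ = ENNReal.ofReal (1 + ∑ i, l i) := by
    rw [ENNReal.ofReal_add zero_le_one (Finset.sum_nonneg fun i _ ↦ hl i),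
      ENNReal.ofReal_sum_of_nonneg fun i _ ↦ hl i]
    simp
  rw [qMix, Measure.smul_apply, hsum, smul_eq_mul]
  exact ENNReal.inv_mul_cancel (by simpa using one_add_sum_pos hl) ENNReal.ofReal_ne_top

lemma qMix_eq_sum_smul : qMix q qi l = ∑ o : Option (Fin m),
    ((ENNReal.ofReal (1 + ∑ i, l i))⁻¹ * o.elim 1 fun i ↦ ENNReal.ofReal (l i)) • o.elim q qi := by
  simp [qMix, Fintype.sum_option, Finset.smul_sum, smul_smul]

lemma smul_qMix_le_qMix_smul (hl : 0 ≤ l) {c : ℝ} (hc0 : 0 ≤ c) (hc1 : c ≤ 1) :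
    ENNReal.ofReal c • qMix q qi l ≤ qMix q qi (c • l) := by
  have hZ : 1 + ∑ i, (c • l) i ≤ 1 + ∑ i, l i := by
    gcongr with i
    exact mul_le_of_le_one_left (hl i) hc1
  calc ENNReal.ofReal c • qMix q qi l
      = (ENNReal.ofReal (1 + ∑ i, l i))⁻¹ •
          (ENNReal.ofReal c • q + ∑ i, ENNReal.ofReal ((c • l) i) • qi i) := by
        simp_rw [qMix, smul_comm (ENNReal.ofReal c), smul_add, Finset.smul_sum, smul_smul,
          Pi.smul_apply, smul_eq_mul, ENNReal.ofReal_mul hc0]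
    _ ≤ qMix q qi (c • l) := by
        rw [qMix]
        gcongr
        exact fun s ↦ mul_le_of_le_one_left' (ENNReal.ofReal_le_one.2 hc1)

lemma smul_qMix_eq (hl : 0 ≤ l) : ENNReal.ofReal (1 + ∑ i, l i) • qMix q qi l =
    q + ∑ i, ENNReal.ofReal (l i) • qi i := by
  rw [qMix, smul_smul, ENNReal.mul_inv_cancel (by simpa using one_add_sum_pos hl)
    ENNReal.ofReal_ne_top, one_smul]

lemma qMix_add_single (hl : 0 ≤ l) (i : Fin m) {t : ℝ} (ht : 0 ≤ t) :
    qMix q qi (l + Pi.single i t) =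
      ((1 + ∑ j, l j) / (1 + ∑ j, l j + t)).toNNReal • qMix q qi l
        + (t / (1 + ∑ j, l j + t)).toNNReal • qi i := by
  have hZ := one_add_sum_pos hl
  have hZt : 0 < 1 + ∑ j, l j + t := by positivity
  have hnorm : 1 + ∑ j, (l + Pi.single i t : Fin m → ℝ) j = 1 + ∑ j, l j + t := by
    simp [Finset.sum_add_distrib, add_assoc]
  have hsum : ∑ j, ENNReal.ofReal ((l + Pi.single i t : Fin m → ℝ) j) • qi j =
      ∑ j, ENNReal.ofReal (l j) • qi j + ENNReal.ofReal t • qi i := by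
    have hsingle (j) : ENNReal.ofReal ((Pi.single i t : Fin m → ℝ) j) • qi j =
        if i = j then ENNReal.ofReal t • qi i else 0 := by
      rcases eq_or_ne i j with rfl | hij <;> simp [*]
    have hnonneg : (0 : Fin m → ℝ) ≤ Pi.single i t := Pi.single_nonneg.2 ht
    simp_rw [Pi.add_apply, ENNReal.ofReal_add (hl _) (hnonneg _), add_smul,
      Finset.sum_add_distrib, hsingle, Finset.sum_ite_eq, Finset.mem_univ, if_true]
  simp_rw [ENNReal.smul_def, ENNReal.ofNNReal_toNNReal]
  rw [qMix, hnorm, hsum, ← add_assoc, ← smul_qMix_eq hl, smul_add, smul_smul, smul_smul,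
    ENNReal.ofReal_div_of_pos hZt, ENNReal.ofReal_div_of_pos hZt, ENNReal.div_eq_inv_mul,
    ENNReal.div_eq_inv_mul]

end WeightedMixture

section Duality

variable {X : Type*} [MeasurableSpace X] {m : ℕ} {q : Measure X} {qi : Fin m → Measure X}
  {l l' b : Fin m → ℝ} {p : Measure X}

lemma KL_eq_coe_klDiv (μ ν : Measure X) [IsProbabilityMeasure μ] [IsProbabilityMeasure ν] :
    KL μ ν = klDiv μ ν := by
  by_cases h : μ ≪ ν ∧ Integrable (llr μ ν) μ
  · rw [KL, if_pos h, klDiv_eq_ofReal_integral_llr h.1 h.2, EReal.coe_ennreal_ofReal,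
      max_eq_left (by simpa using integral_llr_add_sub_measure_univ_nonneg h.1 h.2)]
  · rw [KL, if_neg h, not_ne_iff.1 (klDiv_ne_top_iff.not.2 h), EReal.coe_ennreal_top]

/-- The Lagrangian `L(λ, p)` of the constrained problem, so that `dualFn` is its infimum over the
probability measures `p`. -/
noncomputable def lagrangian (q : Measure X) (qi : Fin m → Measure X) (b l : Fin m → ℝ)
    (p : Measure X) : EReal :=
  KL q p + ∑ i, (l i : EReal) * (KL (qi i) p - (b i : EReal))

/-- The part of the Lagrangian depending on `p`, without the constant `∑ i, l i * b i`. It takes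
values in `ℝ≥0∞`, where sums and products need no case distinctions. -/
noncomputable def weightedKL (q : Measure X) (qi : Fin m → Measure X) (l : Fin m → ℝ)
    (p : Measure X) : ℝ≥0∞ :=
  klDiv q p + ∑ i, ENNReal.ofReal (l i) * klDiv (qi i) p

lemma coe_mul_coe_ennreal_sub_coe {x y : ℝ} (hx : 0 ≤ x) (a : ℝ≥0∞) :
    (x : EReal) * (a - y) = (ENNReal.ofReal x * a : ℝ≥0∞) - ((x * y : ℝ) : EReal) := by
  rcases hx.eq_or_lt with rfl | hpos
  · simp
  rw [EReal.coe_ennreal_mul, EReal.coe_ennreal_ofReal, max_eq_left hx]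
  induction a with
  | top =>
    rw [EReal.coe_ennreal_top, EReal.top_sub_coe, EReal.coe_mul_top_of_pos hpos, EReal.top_sub_coe]
  | coe k =>
    rw [EReal.coe_nnreal_eq_coe_real, ← EReal.coe_sub, ← EReal.coe_mul, ← EReal.coe_mul,
      ← EReal.coe_sub, mul_sub]

lemma sum_coe_ennreal_sub_coe {ι : Type*} (s : Finset ι) (a : ι → ℝ≥0∞) (y : ι → ℝ) :
    ∑ i ∈ s, ((a i : EReal) - y i) = (∑ i ∈ s, a i : ℝ≥0∞) - ((∑ i ∈ s, y i : ℝ) : EReal) := by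
  let coeENNReal : ℝ≥0∞ →+ EReal := ⟨⟨(↑), rfl⟩, EReal.coe_ennreal_add⟩
  let coeReal : ℝ →+ EReal := ⟨⟨(↑), rfl⟩, EReal.coe_add⟩
  simp_rw [sub_eq_add_neg, ← EReal.coe_neg, Finset.sum_add_distrib, ← Finset.sum_neg_distrib]
  exact congrArg₂ (· + ·) (map_sum coeENNReal a s).symm (map_sum coeReal (fun i ↦ -y i) s).symm

lemma lagrangian_le_KL_of_feasible (hl : 0 ≤ l) (hp : ∀ i, KL (qi i) p ≤ b i) :
    lagrangian q qi b l p ≤ KL q p := by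
  refine add_le_of_nonpos_right (Finset.sum_nonpos fun i _ ↦ ?_)
  exact mul_nonpos_of_nonneg_of_nonpos (EReal.coe_nonneg.2 (hl i)) (EReal.sub_nonpos.2 (hp i))

variable [IsProbabilityMeasure q] [∀ i, IsProbabilityMeasure (qi i)]

lemma lagrangian_eq_weightedKL_sub [IsProbabilityMeasure p] (hl : 0 ≤ l) :
    lagrangian q qi b l p = (weightedKL q qi l p : EReal) - ((∑ i, l i * b i : ℝ) : EReal) := by
  simp_rw [lagrangian, KL_eq_coe_klDiv, coe_mul_coe_ennreal_sub_coe (hl _), sum_coe_ennreal_sub_coe]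
  rw [weightedKL, EReal.coe_ennreal_add, add_sub_assoc]

instance isProbabilityMeasure_optionElim (o : Option (Fin m)) :
    IsProbabilityMeasure (o.elim q qi) := by
  cases o <;> dsimp only [Option.elim] <;> infer_instance

lemma weightedKL_qMix_le [IsProbabilityMeasure p] (hl : 0 ≤ l) :
    weightedKL q qi l (qMix q qi l) ≤ weightedKL q qi l p := by
  have := isProbabilityMeasure_qMix (q := q) (qi := qi) hl
  have hZ : (ENNReal.ofReal (1 + ∑ i, l i))⁻¹ ≠ ∞ := by simpa using one_add_sum_pos hl
  have hmix := sum_mul_klDiv_mixture_le (ρ := p) (qMix_eq_sum_smul (q := q) (qi := qi) (l := l))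
  simp_rw [Fintype.sum_option, mul_assoc, ← Finset.mul_sum, ← mul_add, Option.elim, one_mul] at hmix
  exact (ENNReal.mul_le_mul_iff_right (by simp) hZ).1 hmix

lemma klDiv_qMix_ne_top (hl : 0 ≤ l) : klDiv q (qMix q qi l) ≠ ∞ := by
  have := isProbabilityMeasure_qMix (q := q) (qi := qi) hl
  exact klDiv_ne_top_of_eq_sum_smul (P := fun o : Option (Fin m) ↦ o.elim q qi) (i := none)
    qMix_eq_sum_smul (by simp)

lemma klDiv_qMix_ne_top_of_pos (hl : 0 ≤ l) {i : Fin m} (hi : 0 < l i) :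
    klDiv (qi i) (qMix q qi l) ≠ ∞ := by
  have := isProbabilityMeasure_qMix (q := q) (qi := qi) hl
  exact klDiv_ne_top_of_eq_sum_smul (P := fun o : Option (Fin m) ↦ o.elim q qi) (i := some i)
    qMix_eq_sum_smul (by simp [hi])

lemma lagrangian_qMix_le [IsProbabilityMeasure p] (hl : 0 ≤ l) :
    lagrangian q qi b l (qMix q qi l) ≤ lagrangian q qi b l p := by
  have := isProbabilityMeasure_qMix (q := q) (qi := qi) hl
  rw [lagrangian_eq_weightedKL_sub hl, lagrangian_eq_weightedKL_sub hl]
  exact EReal.sub_le_sub (EReal.coe_ennreal_le_coe_ennreal_iff.2 (weightedKL_qMix_le hl)) le_rfl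

lemma lagrangian_qMix_le_dualFn (hl : 0 ≤ l) :
    lagrangian q qi b l (qMix q qi l) ≤ dualFn q qi b l := by
  refine le_iInf fun ⟨p, hp⟩ ↦ ?_
  exact lagrangian_qMix_le hl

lemma lagrangian_eq_coe [IsProbabilityMeasure p] (hl : 0 ≤ l) (hp : klDiv q p ≠ ∞)
    (hpi : ∀ i, 0 < l i → klDiv (qi i) p ≠ ∞) : lagrangian q qi b l p =
      (((klDiv q p).toReal + ∑ i, l i * ((klDiv (qi i) p).toReal - b i) : ℝ) : EReal) := by
  have hterm (i) : ENNReal.ofReal (l i) * klDiv (qi i) p ≠ ∞ := by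
    rcases (hl i).eq_or_lt with hi | hi
    · simp [← hi]
    · exact ENNReal.mul_ne_top ENNReal.ofReal_ne_top (hpi i hi)
  have hsum := ENNReal.sum_ne_top.2 fun i (_ : i ∈ Finset.univ) ↦ hterm i
  have htoReal : (weightedKL q qi l p).toReal =
      (klDiv q p).toReal + ∑ i, l i * (klDiv (qi i) p).toReal := by
    rw [weightedKL, ENNReal.toReal_add hp hsum, ENNReal.toReal_sum fun i _ ↦ hterm i]
    simp_rw [ENNReal.toReal_mul, ENNReal.toReal_ofReal (hl _)]
  have hne_top : weightedKL q qi l p ≠ ∞ := ENNReal.add_ne_top.2 ⟨hp, hsum⟩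
  rw [lagrangian_eq_weightedKL_sub hl, ← EReal.coe_ennreal_toReal hne_top, htoReal,
    ← EReal.coe_sub]
  simp_rw [mul_sub, Finset.sum_sub_distrib, add_sub_assoc]

lemma sum_sub_mul_klDiv_qMix_sub_nonpos (hl : 0 ≤ l) (hl' : 0 ≤ l')
    (hsupp : ∀ i, 0 < l i → 0 < l' i) (hle : dualFn q qi b l' ≤ dualFn q qi b l) :
    ∑ i, (l' i - l i) * ((klDiv (qi i) (qMix q qi l')).toReal - b i) ≤ 0 := by
  have := isProbabilityMeasure_qMix (q := q) (qi := qi) hl'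
  have hchain : lagrangian q qi b l' (qMix q qi l') ≤ lagrangian q qi b l (qMix q qi l') :=
    calc lagrangian q qi b l' (qMix q qi l') ≤ dualFn q qi b l' := lagrangian_qMix_le_dualFn hl'
      _ ≤ dualFn q qi b l := hle
      _ ≤ lagrangian q qi b l (qMix q qi l') := iInf_le_of_le ⟨qMix q qi l', this⟩ le_rfl
  rw [lagrangian_eq_coe hl' (klDiv_qMix_ne_top hl') fun i ↦ klDiv_qMix_ne_top_of_pos hl',
    lagrangian_eq_coe hl (klDiv_qMix_ne_top hl')
      fun i hi ↦ klDiv_qMix_ne_top_of_pos hl' (hsupp i hi), EReal.coe_le_coe_iff] at hchain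
  simp_rw [sub_mul, Finset.sum_sub_distrib]
  linarith

lemma klDiv_qMix_add_single_ne_top (hl : 0 ≤ l) (i : Fin m) {t : ℝ} (ht : 0 < t) :
    klDiv (qi i) (qMix q qi (l + Pi.single i t)) ≠ ∞ :=
  klDiv_qMix_ne_top_of_pos (add_nonneg hl (Pi.single_nonneg.2 ht.le))
    (by simpa using add_pos_of_nonneg_of_pos (hl i) ht)

lemma toReal_klDiv_qMix_add_single_le (hl : 0 ≤ l)
    (hmax : IsMaxOn (dualFn q qi b) (Set.Ici 0) l) (i : Fin m) {t : ℝ} (ht : 0 < t) :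
    (klDiv (qi i) (qMix q qi (l + Pi.single i t))).toReal ≤ b i := by
  have hsingle : (0 : Fin m → ℝ) ≤ Pi.single i t := Pi.single_nonneg.2 ht.le
  have hl' : 0 ≤ l + Pi.single i t := add_nonneg hl hsingle
  have hgrad := sum_sub_mul_klDiv_qMix_sub_nonpos hl hl'
    (fun j hj ↦ add_pos_of_pos_of_nonneg hj (hsingle j)) (hmax hl')
  simp_rw [Pi.add_apply, add_sub_cancel_left, Pi.single_apply, ite_mul, zero_mul,
    Finset.sum_ite_eq', Finset.mem_univ, if_true] at hgrad
  exact sub_nonpos.1 (nonpos_of_mul_nonpos_right hgrad ht)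

lemma nonneg_of_isMaxOn_dualFn (hl : 0 ≤ l) (hmax : IsMaxOn (dualFn q qi b) (Set.Ici 0) l)
    (i : Fin m) : 0 ≤ b i :=
  ENNReal.toReal_nonneg.trans (toReal_klDiv_qMix_add_single_le hl hmax i one_pos)

lemma klDiv_qMix_le_of_isMaxOn (hl : 0 ≤ l) (hmax : IsMaxOn (dualFn q qi b) (Set.Ici 0) l)
    (i : Fin m) : klDiv (qi i) (qMix q qi l) ≤ ENNReal.ofReal (b i) := by
  have := isProbabilityMeasure_qMix (q := q) (qi := qi) hl
  have hb := nonneg_of_isMaxOn_dualFn hl hmax i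
  have hZ := one_add_sum_pos hl
  have hZt : Tendsto (fun t ↦ 1 + ∑ j, l j + t) (𝓝[>] 0) (𝓝 (1 + ∑ j, l j)) := by
    simpa using ((continuous_const_add (1 + ∑ j, l j)).tendsto 0).mono_left nhdsWithin_le_nhds
  have ha : Tendsto (fun t ↦ ((1 + ∑ j, l j) / (1 + ∑ j, l j + t)).toNNReal) (𝓝[>] 0) (𝓝 1) := by
    simpa [div_self hZ.ne'] using
      tendsto_real_toNNReal ((tendsto_const_nhds (x := 1 + ∑ j, l j)).div hZt hZ.ne')
  have hc : Tendsto (fun t ↦ (t / (1 + ∑ j, l j + t)).toNNReal) (𝓝[>] 0) (𝓝 0) := by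
    simpa using tendsto_real_toNNReal
      ((tendsto_id.mono_left nhdsWithin_le_nhds).div hZt hZ.ne')
  refine (klDiv_le_liminf_klDiv_smul_add_smul_self ha hc).trans
    (liminf_le_of_frequently_le' (Eventually.frequently ?_))
  filter_upwards [self_mem_nhdsWithin] with t ht
  rw [← qMix_add_single hl i (le_of_lt ht),
    ENNReal.le_ofReal_iff_toReal_le (klDiv_qMix_add_single_ne_top hl i ht) hb]
  exact toReal_klDiv_qMix_add_single_le hl hmax i ht

lemma KL_qMix_le_of_isMaxOn (hl : 0 ≤ l) (hmax : IsMaxOn (dualFn q qi b) (Set.Ici 0) l)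
    (i : Fin m) : KL (qi i) (qMix q qi l) ≤ b i := by
  have := isProbabilityMeasure_qMix (q := q) (qi := qi) hl
  rw [KL_eq_coe_klDiv, ← max_eq_left (nonneg_of_isMaxOn_dualFn hl hmax i),
    ← EReal.coe_ennreal_ofReal]
  exact EReal.coe_ennreal_le_coe_ennreal_iff.2 (klDiv_qMix_le_of_isMaxOn hl hmax i)

lemma sum_mul_klDiv_qMix_smul_sub_nonneg (hl : 0 ≤ l)
    (hmax : IsMaxOn (dualFn q qi b) (Set.Ici 0) l) {c : ℝ} (hc0 : 0 < c) (hc1 : c < 1) :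
    0 ≤ ∑ i, l i * ((klDiv (qi i) (qMix q qi (c • l))).toReal - b i) := by
  have hcl : 0 ≤ c • l := smul_nonneg hc0.le hl
  have hgrad := sum_sub_mul_klDiv_qMix_sub_nonpos hl hcl (fun i hi ↦ mul_pos hc0 hi) (hmax hcl)
  have hfactor : ∑ i, ((c • l) i - l i) * ((klDiv (qi i) (qMix q qi (c • l))).toReal - b i) =
      (c - 1) * ∑ i, l i * ((klDiv (qi i) (qMix q qi (c • l))).toReal - b i) := by
    simp_rw [Finset.mul_sum, Pi.smul_apply, smul_eq_mul, ← sub_one_mul, mul_assoc]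
  rw [hfactor] at hgrad
  exact nonneg_of_mul_nonpos_right hgrad (sub_neg.2 hc1)

lemma toReal_klDiv_qMix_smul_le (hl : 0 ≤ l) {i : Fin m}
    (hi : klDiv (qi i) (qMix q qi l) ≠ ∞) {c : ℝ} (hc0 : 0 < c) (hc1 : c ≤ 1) :
    (klDiv (qi i) (qMix q qi (c • l))).toReal ≤
      (klDiv (qi i) (qMix q qi l)).toReal - Real.log c := by
  have := isProbabilityMeasure_qMix (q := q) (qi := qi) hl
  have := isProbabilityMeasure_qMix (q := q) (qi := qi) (smul_nonneg hc0.le hl)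
  have hle := klDiv_le_add_of_smul_le (μ := qi i) hc0
    (smul_qMix_le_qMix_smul (q := q) (qi := qi) hl hc0.le hc1)
  have hlog : 0 ≤ -Real.log c := neg_nonneg.2 (Real.log_nonpos hc0.le hc1)
  have htoReal := ENNReal.toReal_mono (by simp [hi]) hle
  rwa [ENNReal.toReal_add hi ENNReal.ofReal_ne_top, ENNReal.toReal_ofReal hlog, ← sub_eq_add_neg]
    at htoReal

/- Complementary slackness: moving from `l` towards the origin does not increase `dualFn`. -/
lemma sum_mul_klDiv_qMix_sub_nonneg (hl : 0 ≤ l) (hmax : IsMaxOn (dualFn q qi b) (Set.Ici 0) l) :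
    0 ≤ ∑ i, l i * ((klDiv (qi i) (qMix q qi l)).toReal - b i) := by
  have hbound : ∀ᶠ c in 𝓝[<] (1 : ℝ),
      0 ≤ ∑ i, l i * ((klDiv (qi i) (qMix q qi l)).toReal - Real.log c - b i) := by
    filter_upwards [Ioo_mem_nhdsLT zero_lt_one] with c ⟨hc0, hc1⟩
    refine (sum_mul_klDiv_qMix_smul_sub_nonneg hl hmax hc0 hc1).trans ?_
    gcongr with i
    · exact hl i
    · exact toReal_klDiv_qMix_smul_le hl
        (ne_top_of_le_ne_top ENNReal.ofReal_ne_top (klDiv_qMix_le_of_isMaxOn hl hmax i)) hc0 hc1.le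
  refine ge_of_tendsto (Tendsto.mono_left ?_ nhdsWithin_le_nhds) hbound
  have hcont : ContinuousAt (fun c : ℝ ↦
      ∑ i, l i * ((klDiv (qi i) (qMix q qi l)).toReal - Real.log c - b i)) 1 := by
    fun_prop (disch := norm_num)
  simpa using hcont.tendsto

lemma KL_qMix_le_lagrangian (hl : 0 ≤ l) (hmax : IsMaxOn (dualFn q qi b) (Set.Ici 0) l) :
    KL q (qMix q qi l) ≤ lagrangian q qi b l (qMix q qi l) := by
  have := isProbabilityMeasure_qMix (q := q) (qi := qi) hl
  have hq := klDiv_qMix_ne_top (q := q) (qi := qi) hl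
  rw [KL_eq_coe_klDiv, ← EReal.coe_ennreal_toReal hq,
    lagrangian_eq_coe hl hq fun i ↦ klDiv_qMix_ne_top_of_pos hl, EReal.coe_le_coe_iff]
  exact le_add_of_nonneg_right (sum_mul_klDiv_qMix_sub_nonneg hl hmax)

end Duality

theorem stmt3_general {X : Type*} [MeasurableSpace X] {m : ℕ}
    (q : Measure X) [IsProbabilityMeasure q]
    (qi : Fin m → Measure X) (hqi : ∀ i, IsProbabilityMeasure (qi i))
    (b : Fin m → ℝ)
    (lstar : Fin m → ℝ) (hlstar : ∀ i, 0 ≤ lstar i)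
    (hmax : ∀ l : Fin m → ℝ, (∀ i, 0 ≤ l i) → dualFn q qi b l ≤ dualFn q qi b lstar) :
    (∀ i, KL (qi i) (qMix q qi lstar) ≤ (b i : EReal)) ∧
    KL q (qMix q qi lstar)
      = sInf {x : EReal | ∃ p : Measure X, IsProbabilityMeasure p ∧
          (∀ i, KL (qi i) p ≤ (b i : EReal)) ∧ x = KL q p} := by
  have hmix := isProbabilityMeasure_qMix (q := q) (qi := qi) hlstar
  have hfeasible := KL_qMix_le_of_isMaxOn hlstar hmax
  refine ⟨hfeasible, le_antisymm (le_sInf ?_) (sInf_le ⟨_, hmix, hfeasible, rfl⟩)⟩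
  rintro _ ⟨p, hp, hp_feasible, rfl⟩
  calc KL q (qMix q qi lstar) ≤ lagrangian q qi b lstar (qMix q qi lstar) :=
        KL_qMix_le_lagrangian hlstar hmax
    _ ≤ lagrangian q qi b lstar p := lagrangian_qMix_le hlstar
    _ ≤ KL q p := lagrangian_le_KL_of_feasible hlstar hp_feasible

/-- under the Slater condition, if `λ*` maximizes the dual function over
`ℝ₊ᵐ`, then the mixture `q_mix^{(λ*)}` is an optimal solution of the constrained
problem: it is feasible, and its objective value `KL(q‖q_mix^{(λ*)})` equals the optimal
value of the constrained problem. -/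
theorem stmt3 {X : Type*} [MeasurableSpace X] {m : ℕ}
    (q : Measure X) [IsProbabilityMeasure q]
    (qi : Fin m → Measure X) (hqi : ∀ i, IsProbabilityMeasure (qi i))
    (b : Fin m → ℝ)
    (hSlater : ∃ phat : Measure X, IsProbabilityMeasure phat ∧
      ∃ ζ : ℝ, 0 < ζ ∧ ∀ i, KL (qi i) phat ≤ ((b i - ζ : ℝ) : EReal))
    (lstar : Fin m → ℝ) (hlstar : ∀ i, 0 ≤ lstar i)
    (hmax : ∀ l : Fin m → ℝ, (∀ i, 0 ≤ l i) → dualFn q qi b l ≤ dualFn q qi b lstar) :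
    (∀ i, KL (qi i) (qMix q qi lstar) ≤ (b i : EReal)) ∧
    KL q (qMix q qi lstar)
      = sInf {x : EReal | ∃ p : Measure X, IsProbabilityMeasure p ∧
          (∀ i, KL (qi i) p ≤ (b i : EReal)) ∧ x = KL q p} :=
  stmt3_general q qi hqi b lstar hlstar hmax
end

section
/- Let q, q¹, …, qᵐ be probability measures on a measurable space X and let λ, λ′ ∈ ℝ₊ᵐ. Then the total variation distance between the two mixtures satisfies TV(q_mix^{(λ)}, q_mix^{(λ′)}) ≤ ‖λ − λ′‖₁, where q_mix^{(λ)} = (q + Σᵢ λᵢ qⁱ)/(1 + Σᵢ λᵢ) and ‖λ − λ′‖₁ = Σᵢ |λᵢ − λ′ᵢ|. -/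
/-!
If `p` is the mean of points `z i` under weights `w'`, then `∑ w' i • (z i - p) = 0`. The mean under
weights `w` therefore differs from `p` by `(∑ w)⁻¹ • ∑ (w i - w' i) • (z i - p)`, and each
`‖z i - p‖` is at most the diameter of the points. For a measurable set `A`, the `A`-mass of a
mixture is such a mean of the masses `μ i A`, and in `qMix` the measure `q` has weight `1` under
both weight vectors, so it contributes nothing to the difference.
-/

open MeasureTheory

/-- The total variation distance between two measures:
`TV(μ, ν) = sup over measurable sets A of |μ(A) − ν(A)|`. -/
noncomputable def TV {X : Type*} [MeasurableSpace X] (μ ν : Measure X) : ℝ :=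
  sSup {r : ℝ | ∃ A : Set X, MeasurableSet A ∧ r = |(μ A).toReal - (ν A).toReal|}

section CenterMass

variable {ι E : Type*} {s : Finset ι}

theorem centerMass_sub_centerMass {R : Type*} [Field R] [AddCommGroup E] [Module R E]
    {w w' : ι → R} (z : ι → E) (hw : ∑ i ∈ s, w i ≠ 0) (hw' : ∑ i ∈ s, w' i ≠ 0) :
    s.centerMass w z - s.centerMass w' z =
      (∑ i ∈ s, w i)⁻¹ • ∑ i ∈ s, (w i - w' i) • (z i - s.centerMass w' z) := by
  set p := s.centerMass w' z with hp
  have sum_eq : ∑ i ∈ s, w' i • z i = (∑ i ∈ s, w' i) • p := by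
    rw [hp, Finset.centerMass, smul_inv_smul₀ hw']
  have sum_sub_eq : ∑ i ∈ s, (w i - w' i) • (z i - p) =
      ∑ i ∈ s, w i • z i - (∑ i ∈ s, w i) • p := by
    simp only [sub_smul, smul_sub, Finset.sum_sub_distrib, ← Finset.sum_smul, sum_eq,
      sub_sub_sub_cancel_right]
  rw [sum_sub_eq, smul_sub, inv_smul_smul₀ hw, Finset.centerMass]

variable [SeminormedAddCommGroup E] [NormedSpace ℝ E] {w w' : ι → ℝ} {z : ι → E} {d : ℝ}

theorem dist_centerMass_le_of_forall_dist_le {x : E} (hw₀ : ∀ i ∈ s, 0 ≤ w i)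
    (hw : 0 < ∑ i ∈ s, w i) (hz : ∀ i ∈ s, dist (z i) x ≤ d) : dist (s.centerMass w z) x ≤ d :=
  (convex_closedBall x d).centerMass_mem hw₀ hw hz

theorem dist_centerMass_centerMass_le (hw : 0 < ∑ i ∈ s, w i) (hw'₀ : ∀ i ∈ s, 0 ≤ w' i)
    (hw' : 0 < ∑ i ∈ s, w' i) (hz : ∀ i ∈ s, ∀ j ∈ s, dist (z i) (z j) ≤ d) :
    dist (s.centerMass w z) (s.centerMass w' z) ≤
      (∑ i ∈ s, |w i - w' i|) / (∑ i ∈ s, w i) * d := by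
  set p := s.centerMass w' z
  have norm_sub_le (i) (hi : i ∈ s) : ‖z i - p‖ ≤ d := by
    rw [← dist_eq_norm, dist_comm]
    exact dist_centerMass_le_of_forall_dist_le hw'₀ hw' fun j hj => hz j hj i hi
  calc dist (s.centerMass w z) p
      = (∑ i ∈ s, w i)⁻¹ * ‖∑ i ∈ s, (w i - w' i) • (z i - p)‖ := by
        rw [dist_eq_norm, centerMass_sub_centerMass z hw.ne' hw'.ne', norm_smul,
          Real.norm_of_nonneg (inv_nonneg.2 hw.le)]
    _ ≤ (∑ i ∈ s, w i)⁻¹ * ∑ i ∈ s, |w i - w' i| * d := by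
        gcongr
        refine norm_sum_le_of_le s fun i hi => ?_
        rw [norm_smul, Real.norm_eq_abs]
        gcongr
        exact norm_sub_le i hi
    _ = (∑ i ∈ s, |w i - w' i|) / (∑ i ∈ s, w i) * d := by
        rw [← Finset.sum_mul, div_eq_inv_mul, mul_assoc]

end CenterMass

section TotalVariation

variable {X : Type*} [MeasurableSpace X] {μ ν : Measure X} {c : ℝ}

theorem TV_le (h : ∀ A, MeasurableSet A → |μ.real A - ν.real A| ≤ c) : TV μ ν ≤ c := by
  refine csSup_le ⟨_, ∅, .empty, rfl⟩ ?_
  rintro _ ⟨A, hA, rfl⟩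
  exact h A hA

theorem abs_measureReal_sub_le [IsFiniteMeasure μ] [IsFiniteMeasure ν]
    (hμ : μ.real Set.univ ≤ c) (hν : ν.real Set.univ ≤ c) (A : Set X) :
    |μ.real A - ν.real A| ≤ c :=
  abs_sub_le_of_nonneg_of_le measureReal_nonneg
    ((measureReal_mono A.subset_univ).trans hμ) measureReal_nonneg
    ((measureReal_mono A.subset_univ).trans hν)

theorem TV_le_of_measureReal_univ_le [IsFiniteMeasure μ] [IsFiniteMeasure ν]
    (hμ : μ.real Set.univ ≤ c) (hν : ν.real Set.univ ≤ c) : TV μ ν ≤ c :=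
  TV_le fun A _ => abs_measureReal_sub_le hμ hν A

theorem abs_measureReal_sub_le_TV [IsFiniteMeasure μ] [IsFiniteMeasure ν] {A : Set X}
    (hA : MeasurableSet A) : |μ.real A - ν.real A| ≤ TV μ ν := by
  refine le_csSup ⟨max (μ.real Set.univ) (ν.real Set.univ), ?_⟩ ⟨A, hA, rfl⟩
  rintro _ ⟨B, -, rfl⟩
  exact abs_measureReal_sub_le (le_max_left _ _) (le_max_right _ _) B

end TotalVariation

section Mixture

variable {X ι : Type*} [MeasurableSpace X] {s : Finset ι} {w w' : ι → ℝ}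

/-- The finite mixture `(∑ i ∈ s, w i • μ i) / ∑ i ∈ s, w i` of the measures `μ i`; it puts the
base measure of `qMix` on the same footing as the others. Negative weights are truncated to `0`
by `ENNReal.ofReal`. -/
noncomputable def mixture (s : Finset ι) (w : ι → ℝ) (μ : ι → Measure X) : Measure X :=
  (ENNReal.ofReal (∑ i ∈ s, w i))⁻¹ • ∑ i ∈ s, ENNReal.ofReal (w i) • μ i

theorem qMix_eq_mixture {m : ℕ} (q : Measure X) (qi : Fin m → Measure X) (l : Fin m → ℝ) :
    qMix q qi l = mixture Finset.univ (Fin.cons 1 l : Fin (m + 1) → ℝ) (Fin.cons q qi) := by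
  simp only [qMix, mixture, Fin.sum_univ_succ, Fin.cons_zero, Fin.cons_succ, ENNReal.ofReal_one,
    one_smul]

variable {μ : ι → Measure X} [∀ i, IsFiniteMeasure (μ i)]

theorem measureReal_mixture (hw : ∀ i ∈ s, 0 ≤ w i) (A : Set X) :
    (mixture s w μ).real A = s.centerMass w fun i => (μ i).real A := by
  have ne_top (i) (_ : i ∈ s) : ENNReal.ofReal (w i) * μ i A ≠ ⊤ :=
    ENNReal.mul_ne_top ENNReal.ofReal_ne_top (measure_ne_top _ _)
  have sum_measureReal :
      (∑ i ∈ s, ENNReal.ofReal (w i) • μ i).real A = ∑ i ∈ s, w i * (μ i).real A := by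
    simp only [measureReal_def, Measure.finsetSum_apply, Measure.smul_apply, smul_eq_mul]
    rw [ENNReal.toReal_sum ne_top]
    exact Finset.sum_congr rfl fun i hi => by
      rw [ENNReal.toReal_mul, ENNReal.toReal_ofReal (hw i hi)]
  rw [mixture, measureReal_ennreal_smul_apply, sum_measureReal, ENNReal.toReal_inv,
    ENNReal.toReal_ofReal (Finset.sum_nonneg hw)]
  rfl

theorem TV_mixture_le {d : ℝ} (hw₀ : ∀ i ∈ s, 0 ≤ w i) (hw : 0 < ∑ i ∈ s, w i)
    (hw'₀ : ∀ i ∈ s, 0 ≤ w' i) (hw' : 0 < ∑ i ∈ s, w' i)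
    (hμ : ∀ i ∈ s, ∀ j ∈ s, TV (μ i) (μ j) ≤ d) :
    TV (mixture s w μ) (mixture s w' μ) ≤ (∑ i ∈ s, |w i - w' i|) / (∑ i ∈ s, w i) * d := by
  refine TV_le fun A hA => ?_
  rw [measureReal_mixture hw₀, measureReal_mixture hw'₀]
  have dist_le (i) (hi : i ∈ s) (j) (hj : j ∈ s) : dist ((μ i).real A) ((μ j).real A) ≤ d :=
    (abs_measureReal_sub_le_TV hA).trans (hμ i hi j hj)
  exact dist_centerMass_centerMass_le hw hw'₀ hw' dist_le

end Mixture

theorem stmt12_general {X : Type*} [MeasurableSpace X] {m : ℕ} {c : ℝ}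
    (q : Measure X) [IsFiniteMeasure q] (qi : Fin m → Measure X) [∀ i, IsFiniteMeasure (qi i)]
    (hq : q.real Set.univ ≤ c) (hqi : ∀ i, (qi i).real Set.univ ≤ c)
    {l l' : Fin m → ℝ} (hl : ∀ i, 0 ≤ l i) (hl' : ∀ i, 0 ≤ l' i) :
    TV (qMix q qi l) (qMix q qi l') ≤ (∑ i, |l i - l' i|) / (1 + ∑ i, l i) * c := by
  let μ : Fin (m + 1) → Measure X := Fin.cons q qi
  have isFiniteMeasure_μ (i) : IsFiniteMeasure (μ i) :=
    Fin.cases ‹IsFiniteMeasure q› ‹∀ i, IsFiniteMeasure (qi i)› i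
  have mass_le (i) : (μ i).real Set.univ ≤ c := Fin.cases hq hqi i
  have weight_nonneg {k : Fin m → ℝ} (hk : ∀ i, 0 ≤ k i) (i) :
      0 ≤ (Fin.cons 1 k : Fin (m + 1) → ℝ) i := Fin.cases zero_le_one hk i
  have weight_sum_pos {k : Fin m → ℝ} (hk : ∀ i, 0 ≤ k i) :
      0 < ∑ i, (Fin.cons 1 k : Fin (m + 1) → ℝ) i := by
    rw [Fin.sum_cons]
    exact add_pos_of_pos_of_nonneg one_pos (Finset.sum_nonneg fun i _ => hk i)
  have bound := TV_mixture_le (μ := μ) (fun i _ => weight_nonneg hl i) (weight_sum_pos hl)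
    (fun i _ => weight_nonneg hl' i) (weight_sum_pos hl')
    fun i _ j _ => TV_le_of_measureReal_univ_le (mass_le i) (mass_le j)
  simpa only [μ, ← qMix_eq_mixture, Fin.sum_univ_succ, Fin.cons_zero, Fin.cons_succ, sub_self,
    abs_zero, zero_add] using bound

/-- for probability measures `q, q¹, …, qᵐ` and nonnegative vectors
`λ, λ′`, the total variation distance between the mixtures is bounded by the `ℓ¹`
distance: `TV(q_mix^{(λ)}, q_mix^{(λ′)}) ≤ ‖λ − λ′‖₁`. -/
theorem stmt12 {X : Type*} [MeasurableSpace X] {m : ℕ}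
    (q : Measure X) [IsProbabilityMeasure q]
    (qi : Fin m → Measure X) (hqi : ∀ i, IsProbabilityMeasure (qi i))
    (l l' : Fin m → ℝ) (hl : ∀ i, 0 ≤ l i) (hl' : ∀ i, 0 ≤ l' i) :
    TV (qMix q qi l) (qMix q qi l') ≤ ∑ i, |l i - l' i| := by
  have bound := stmt12_general q qi probReal_univ.le (fun _ => probReal_univ.le) hl hl'
  refine bound.trans ?_
  rw [mul_one]
  exact div_le_self (Finset.sum_nonneg fun i _ => abs_nonneg _)
    (le_add_of_nonneg_right (Finset.sum_nonneg fun i _ => hl i))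
end
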